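/- (De Moivre–Laplace, local form.) Let p ∈ (0,1), q = 1 − p, and let S_n be a binomial random variable with parameters n and p. Let (A_n)_{n≥1} be a nondecreasing sequence of reals with A_1 ≥ 1 and A_n / n^{1/6} → 0 as n → ∞. Then sup_k | √(2π npq) · ℙ[S_n = k] · exp( (np − k)² / (2npq) ) − 1 | → 0 as n → ∞, where the supremum is over all integers k with |np − k| ≤ A_n √(npq). -/

import Mathlib

/-!
Write `n = k + m`, `q = 1 - p`, and let `h x = x log x + 1 - x` (Mathlib's `klFun`). Stirling's
formula gives the binomial probability as a prefactor, asymptotic to `1 / √(2 π n p q)`, times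
`exp (-(n p h (k / (n p)) + n q h (m / (n q))))`. Since `h x = (x - 1)² / 2 + O((x - 1)³)` and
`m - n q = -(k - n p)`, the quadratic terms add up to exactly `(k - n p)² / (2 n p q)`, and what is
left in the exponent is `O(|k - n p|³ / n²)`, which vanishes as soon as `k - n p = o(n^(2/3))`.

All limits are taken along an arbitrary filter, so that uniformity in `k` amounts to choosing the
filter on pairs `(n, k)` that lets `n → ∞` inside the window `|n p - k| ≤ A n √(n p q)`.
-/

open Filter
open Asymptotics InformationTheory Stirling Topology

section Asymptotics

variable {ι : Type*} {l : Filter ι} {r : ℝ}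

lemma isEquivalent_of_sub_isLittleO_rpow {μ y : ι → ℝ} (hμ : Tendsto μ l atTop)
    (hr : r ≤ 1) (hd : (fun i ↦ y i - μ i) =o[l] fun i ↦ μ i ^ r) : y ~[l] μ := by
  refine hd.trans_isBigO (IsBigO.of_bound' ?_)
  filter_upwards [hμ.eventually_ge_atTop 1] with i hi
  rw [Real.norm_of_nonneg (by positivity), Real.norm_of_nonneg (by positivity)]
  exact Real.rpow_le_self_of_one_le hi hr

lemma isLittleO_rpow_mul_const {f g : ι → ℝ} {c : ℝ} (hc : 0 < c) (hg : 0 ≤ᶠ[l] g)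
    (h : f =o[l] fun i ↦ g i ^ r) : f =o[l] fun i ↦ (g i * c) ^ r := by
  have hcr : c ^ r ≠ 0 := (Real.rpow_pos_of_pos hc r).ne'
  refine (h.const_mul_right hcr).congr' .rfl ?_
  filter_upwards [hg] with i hi
  rw [Real.mul_rpow hi hc.le, mul_comm]

lemma tendsto_sqrt_div_mul_div {u v x y : ι → ℝ} (hx : x ~[l] u) (hy : y ~[l] v)
    (hx0 : ∀ᶠ i in l, x i ≠ 0) (hy0 : ∀ᶠ i in l, y i ≠ 0) :
    Tendsto (fun i ↦ √((u i / x i) * (v i / y i))) l (𝓝 1) := by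
  have hux : Tendsto (u / x) l (𝓝 1) := (isEquivalent_iff_tendsto_one hx0).1 hx.symm
  have hvy : Tendsto (v / y) l (𝓝 1) := (isEquivalent_iff_tendsto_one hy0).1 hy.symm
  simpa using (hux.mul hvy).sqrt

lemma isLittleO_mul_sqrt_natCast_mul {A : ℕ → ℝ} (c : ℝ)
    (hA : Tendsto (fun n : ℕ ↦ A n / (n : ℝ) ^ r) atTop (𝓝 0)) :
    (fun n : ℕ ↦ A n * √(n * c)) =o[atTop] fun n : ℕ ↦ (n : ℝ) ^ (r + 1 / 2) := by
  have hA' : A =o[atTop] fun n : ℕ ↦ (n : ℝ) ^ r := by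
    refine isLittleO_of_tendsto' ?_ hA
    filter_upwards [eventually_gt_atTop 0] with n hn h
    exact absurd h (by positivity)
  have hsqrt : (fun n : ℕ ↦ √(n * c)) =O[atTop] fun n : ℕ ↦ (n : ℝ) ^ (1 / 2 : ℝ) := by
    simp_rw [Real.sqrt_mul (Nat.cast_nonneg _), mul_comm _ √c, Real.sqrt_eq_rpow]
    exact isBigO_const_mul_self _ _ _
  refine (hA'.mul_isBigO hsqrt).congr' .rfl ?_
  filter_upwards [eventually_gt_atTop 0] with n hn
  rw [Real.rpow_add (by positivity)]

lemma tendsto_tsub_atTop_of_tendsto_cast_sub {n k : ι → ℕ}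
    (h : Tendsto (fun i ↦ (n i - k i : ℝ)) l atTop) : Tendsto (fun i ↦ n i - k i) l atTop := by
  refine tendsto_natCast_atTop_iff.1 (tendsto_atTop_mono (fun i ↦ ?_) h)
  rw [sub_le_iff_le_add]
  exact_mod_cast le_tsub_add

end Asymptotics

section Stirling

variable {k m n : ℕ}

lemma stirlingSeq_pos (hn : n ≠ 0) : 0 < stirlingSeq n :=
  (Real.sqrt_pos.2 Real.pi_pos).trans_le (sqrt_pi_le_stirlingSeq hn)

lemma factorial_eq_stirlingSeq_mul (hn : n ≠ 0) :
    (n.factorial : ℝ) = stirlingSeq n * (√(2 * n) * (n / Real.exp 1) ^ n) := by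
  have : (0 : ℝ) < n := by positivity
  rw [stirlingSeq, div_mul_cancel₀ _ (by positivity)]

lemma choose_add_eq_stirlingSeq_mul (hk : k ≠ 0) (hm : m ≠ 0) :
    ((k + m).choose k : ℝ) =
      stirlingSeq (k + m) / (stirlingSeq k * stirlingSeq m) * √((k + m) / (2 * k * m)) *
        (((k + m) / k) ^ k * ((k + m) / m) ^ m) := by
  have hσk := stirlingSeq_pos hk
  have hσm := stirlingSeq_pos hm
  have hsqrt : √(2 * (k + m)) = √((k + m) / (2 * k * m)) * (√(2 * k) * √(2 * m)) := by
    rw [← Real.sqrt_mul (by positivity), ← Real.sqrt_mul (by positivity)]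
    congr 1
    field_simp
  have hpow : ((k + m) / Real.exp 1) ^ (k + m) =
      ((k + m) / k) ^ k * ((k + m) / m) ^ m *
        ((k / Real.exp 1) ^ k * (m / Real.exp 1) ^ m) := by
    simp only [div_pow, pow_add]
    field_simp
  rw [Nat.cast_add_choose, factorial_eq_stirlingSeq_mul (by omega : k + m ≠ 0),
    factorial_eq_stirlingSeq_mul hk, factorial_eq_stirlingSeq_mul hm]
  push_cast
  rw [hsqrt, hpow]
  field_simp

lemma tendsto_stirlingSeq_ratio {ι : Type*} {l : Filter ι} {n k m : ι → ℕ}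
    (hn : Tendsto n l atTop) (hk : Tendsto k l atTop) (hm : Tendsto m l atTop) :
    Tendsto (fun i ↦ √Real.pi * stirlingSeq (n i) / (stirlingSeq (k i) * stirlingSeq (m i)))
      l (𝓝 1) := by
  have hσ := tendsto_stirlingSeq_sqrt_pi
  have hπ : √Real.pi * √Real.pi ≠ 0 := by positivity
  have := ((hσ.comp hn).const_mul √Real.pi).div ((hσ.comp hk).mul (hσ.comp hm)) hπ
  rwa [div_self hπ] at this

end Stirling

section PoissonRate

/-- The Poisson rate function `y ↦ μ * klFun (y / μ) = y log (y / μ) - y + μ` of mean `μ`, minus its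
second-order Taylor polynomial at `μ`. It measures how far large deviations depart from the
Gaussian approximation. -/
noncomputable def poissonRateRemainder (μ y : ℝ) : ℝ :=
  μ * klFun (y / μ) - (y - μ) ^ 2 / (2 * μ)

lemma div_natCast_pow_eq_exp {μ : ℝ} (hμ : 0 < μ) (k : ℕ) :
    (μ / k) ^ k = Real.exp (μ - k - μ * klFun (k / μ)) := by
  rcases k.eq_zero_or_pos with rfl | hk
  · simp [klFun_zero]
  have hkμ : (0 : ℝ) < k / μ := by positivity
  calc (μ / k) ^ k = Real.exp (-Real.log (k / μ)) ^ k := by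
        rw [Real.exp_neg, Real.exp_log hkμ, inv_div]
    _ = Real.exp (μ - k - μ * klFun (k / μ)) := by
        rw [← Real.exp_nat_mul, klFun_apply]
        congr 1
        field_simp
        ring

lemma isBigO_log_one_add_sub_taylor :
    (fun t : ℝ ↦ Real.log (1 + t) - (t - t ^ 2 / 2)) =O[𝓝 0] fun t ↦ t ^ 3 := by
  refine IsBigO.of_bound 2 ?_
  filter_upwards [Metric.closedBall_mem_nhds (0 : ℝ) one_half_pos] with t ht
  rw [mem_closedBall_zero_iff, Real.norm_eq_abs] at ht
  have htaylor : |-t + t ^ 2 / 2 + Real.log (1 + t)| ≤ |t| ^ 3 / (1 - |t|) := by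
    have := Real.abs_log_sub_add_sum_range_le (x := -t) (by rw [abs_neg]; linarith) 2
    norm_num [Finset.sum_range_succ] at this
    exact this
  calc |Real.log (1 + t) - (t - t ^ 2 / 2)|
      = |-t + t ^ 2 / 2 + Real.log (1 + t)| := by ring_nf
    _ ≤ |t| ^ 3 / (1 - |t|) := htaylor
    _ ≤ |t| ^ 3 / (1 / 2) := by gcongr; linarith
    _ = 2 * ‖t ^ 3‖ := by rw [norm_pow, Real.norm_eq_abs]; ring

lemma isBigO_klFun_sub_taylor :
    (fun x : ℝ ↦ klFun x - (x - 1) ^ 2 / 2) =O[𝓝 1] fun x ↦ (x - 1) ^ 3 := by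
  have hlog : (fun x : ℝ ↦ Real.log x - (x - 1 - (x - 1) ^ 2 / 2)) =O[𝓝 1]
      fun x ↦ (x - 1) ^ 3 := by
    have hsub : Tendsto (fun x : ℝ ↦ x - 1) (𝓝 1) (𝓝 0) :=
      tendsto_sub_nhds_zero_iff.2 tendsto_id
    simpa [Function.comp_def] using isBigO_log_one_add_sub_taylor.comp_tendsto hsub
  have hmul : (fun x : ℝ ↦ x * (Real.log x - (x - 1 - (x - 1) ^ 2 / 2))) =O[𝓝 1]
      fun x ↦ (x - 1) ^ 3 := by
    simpa using ((continuous_id.tendsto (1 : ℝ)).isBigO_one ℝ).mul hlog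
  have hcube : (fun x : ℝ ↦ (1 / 2) * (x - 1) ^ 3) =O[𝓝 1] fun x ↦ (x - 1) ^ 3 :=
    isBigO_const_mul_self _ _ _
  refine (hmul.sub hcube).congr_left fun x ↦ ?_
  rw [klFun_apply]
  ring

variable {ι : Type*} {l : Filter ι} {μ y : ι → ℝ}

lemma tendsto_poissonRateRemainder (hμ : Tendsto μ l atTop)
    (hd : (fun i ↦ y i - μ i) =o[l] fun i ↦ μ i ^ (2 / 3 : ℝ)) :
    Tendsto (fun i ↦ poissonRateRemainder (μ i) (y i)) l (𝓝 0) := by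
  have hpos : ∀ᶠ i in l, 0 < μ i := hμ.eventually_gt_atTop 0
  have hratio : Tendsto (fun i ↦ y i / μ i) l (𝓝 1) :=
    (isEquivalent_iff_tendsto_one (hpos.mono fun _ hi ↦ hi.ne')).1
      (isEquivalent_of_sub_isLittleO_rpow hμ (by norm_num) hd)
  have hcube : (fun i ↦ (y i - μ i) ^ 3) =o[l] fun i ↦ μ i ^ 2 := by
    refine (hd.pow three_pos).congr' .rfl ?_
    filter_upwards [hpos] with i hi
    rw [← Real.rpow_mul_natCast hi.le]
    norm_num
  have htaylor : (fun i ↦ μ i * (klFun (y i / μ i) - (y i / μ i - 1) ^ 2 / 2)) =O[l]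
      fun i ↦ μ i * (y i / μ i - 1) ^ 3 :=
    (isBigO_refl μ l).mul (isBigO_klFun_sub_taylor.comp_tendsto hratio)
  refine (htaylor.trans_tendsto ?_).congr' ?_
  · refine hcube.tendsto_div_nhds_zero.congr' ?_
    filter_upwards [hpos] with i hi
    field_simp
  · filter_upwards [hpos] with i hi
    rw [poissonRateRemainder]
    field_simp

end PoissonRate

section LocalLimit

/-- The ratio between the probability of `k` successes in `n` trials of success probability `p` and
its Gaussian approximation `exp (-(n p - k)² / (2 n p q)) / √(2 π n p q)`, where `q = 1 - p`; the
divisions by the two factors are written as multiplications by their inverses. -/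
noncomputable def binomialGaussianRatio (p : ℝ) (n k : ℕ) : ℝ :=
  √(2 * Real.pi * n * p * (1 - p)) * (n.choose k * p ^ k * (1 - p) ^ (n - k)) *
    Real.exp ((n * p - k) ^ 2 / (2 * n * p * (1 - p)))

variable {p : ℝ}

lemma binomialGaussianRatio_eq (hp0 : 0 < p) (hp1 : p < 1) {n k : ℕ} (hk : 0 < k) (hkn : k < n) :
    binomialGaussianRatio p n k =
      √Real.pi * stirlingSeq n / (stirlingSeq k * stirlingSeq (n - k)) *
        √((n * p / k) * (n * (1 - p) / (n - k))) *
        Real.exp (-(poissonRateRemainder (n * p) k +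
          poissonRateRemainder (n * (1 - p)) (n - k))) := by
  obtain ⟨m, rfl⟩ := Nat.exists_eq_add_of_le hkn.le
  have hm : 0 < m := Nat.lt_add_right_iff_pos.1 hkn
  have hq0 : 0 < 1 - p := sub_pos.2 hp1
  have hsqrt : √(2 * Real.pi * (k + m) * p * (1 - p)) * √((k + m) / (2 * k * m)) =
      √Real.pi * √(((k + m) * p / k) * ((k + m) * (1 - p) / m)) := by
    rw [← Real.sqrt_mul (by positivity), ← Real.sqrt_mul (by positivity)]
    congr 1
    field_simp
  have hpow : ((k + m : ℝ) / k) ^ k * ((k + m) / m) ^ m * p ^ k * (1 - p) ^ m =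
      ((k + m) * p / k) ^ k * ((k + m) * (1 - p) / m) ^ m := by
    simp only [div_pow, mul_pow]
    ring
  have hexp : ((k + m) * p / k) ^ k * ((k + m) * (1 - p) / m) ^ m *
        Real.exp (((k + m) * p - k) ^ 2 / (2 * (k + m) * p * (1 - p))) =
      Real.exp (-(poissonRateRemainder ((k + m) * p) k +
        poissonRateRemainder ((k + m) * (1 - p)) m)) := by
    rw [div_natCast_pow_eq_exp (by positivity), div_natCast_pow_eq_exp (by positivity),
      ← Real.exp_add, ← Real.exp_add, poissonRateRemainder, poissonRateRemainder]
    congr 1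
    field_simp
    ring
  rw [binomialGaussianRatio, choose_add_eq_stirlingSeq_mul hk.ne' hm.ne', Nat.add_sub_cancel_left]
  push_cast
  rw [add_sub_cancel_left]
  calc _ = stirlingSeq (k + m) / (stirlingSeq k * stirlingSeq m) *
          (√(2 * Real.pi * (k + m) * p * (1 - p)) * √((k + m) / (2 * k * m))) *
          (((k + m : ℝ) / k) ^ k * ((k + m) / m) ^ m * p ^ k * (1 - p) ^ m *
            Real.exp (((k + m) * p - k) ^ 2 / (2 * (k + m) * p * (1 - p)))) := by ring
    _ = _ := by
      rw [hsqrt, hpow, hexp]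
      ring

variable {ι : Type*} {l : Filter ι}

theorem tendsto_binomialGaussianRatio (hp0 : 0 < p) (hp1 : p < 1) {n k : ι → ℕ}
    (hn : Tendsto n l atTop)
    (hd : (fun i ↦ (k i : ℝ) - n i * p) =o[l] fun i ↦ (n i : ℝ) ^ (2 / 3 : ℝ)) :
    Tendsto (fun i ↦ binomialGaussianRatio p (n i) (k i)) l (𝓝 1) := by
  have hq0 : 0 < 1 - p := sub_pos.2 hp1
  have hnR : Tendsto (fun i ↦ (n i : ℝ)) l atTop := tendsto_natCast_atTop_atTop.comp hn
  have hnp : Tendsto (fun i ↦ n i * p) l atTop := hnR.atTop_mul_const hp0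
  have hnq : Tendsto (fun i ↦ n i * (1 - p)) l atTop := hnR.atTop_mul_const hq0
  have hn0 : 0 ≤ᶠ[l] fun i ↦ (n i : ℝ) := .of_forall fun i ↦ (n i).cast_nonneg
  have hdk := isLittleO_rpow_mul_const hp0 hn0 hd
  have hdm : (fun i ↦ (n i - k i : ℝ) - n i * (1 - p)) =o[l]
      fun i ↦ (n i * (1 - p)) ^ (2 / 3 : ℝ) :=
    isLittleO_rpow_mul_const hq0 hn0 (hd.neg_left.congr_left fun i ↦ by ring)
  have hk_equiv := isEquivalent_of_sub_isLittleO_rpow hnp (by norm_num) hdk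
  have hm_equiv := isEquivalent_of_sub_isLittleO_rpow hnq (by norm_num) hdm
  have hk_top : Tendsto (fun i ↦ (k i : ℝ)) l atTop := hk_equiv.symm.tendsto_atTop hnp
  have hm_top : Tendsto (fun i ↦ (n i - k i : ℝ)) l atTop := hm_equiv.symm.tendsto_atTop hnq
  have hk_pos : ∀ᶠ i in l, 0 < k i := (hk_top.eventually_gt_atTop 0).mono fun _ ↦ Nat.cast_pos.1
  have hk_lt : ∀ᶠ i in l, k i < n i :=
    (hm_top.eventually_gt_atTop 0).mono fun _ hi ↦ Nat.cast_lt.1 (sub_pos.1 hi)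
  have hstirling := tendsto_stirlingSeq_ratio hn (tendsto_natCast_atTop_iff.1 hk_top)
    (tendsto_tsub_atTop_of_tendsto_cast_sub hm_top)
  have hsqrt := tendsto_sqrt_div_mul_div hk_equiv hm_equiv (hk_top.eventually_ne_atTop 0)
    (hm_top.eventually_ne_atTop 0)
  have hexp := ((tendsto_poissonRateRemainder hnp hdk).add
    (tendsto_poissonRateRemainder hnq hdm)).neg.rexp
  have hprod := (hstirling.mul hsqrt).mul hexp
  rw [add_zero, neg_zero, Real.exp_zero, one_mul, one_mul] at hprod
  refine hprod.congr' ?_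
  filter_upwards [hk_pos, hk_lt] with i hi hin
  rw [binomialGaussianRatio_eq hp0 hp1 hi hin]

theorem deMoivre_laplace_local_general (p : ℝ) (hp0 : 0 < p) (hp1 : p < 1) (A : ℕ → ℝ)
    (hA : Tendsto (fun n : ℕ ↦ A n / (n : ℝ) ^ (1 / 6 : ℝ)) atTop (𝓝 0)) (ε : ℝ) (hε : 0 < ε) :
    ∃ N₀ : ℕ, ∀ n : ℕ, N₀ ≤ n → ∀ k : ℕ, |n * p - k| ≤ A n * √(n * p * (1 - p)) →
      |binomialGaussianRatio p n k - 1| ≤ ε := by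
  set window : Set (ℕ × ℕ) := {z | |z.1 * p - z.2| ≤ A z.1 * √(z.1 * p * (1 - p))}
  set l : Filter (ℕ × ℕ) := comap Prod.fst atTop ⊓ 𝓟 window
  have hfst : Tendsto Prod.fst l atTop := tendsto_comap.mono_left inf_le_left
  have hwindow : (fun z : ℕ × ℕ ↦ (z.2 : ℝ) - z.1 * p) =O[l]
      fun z ↦ A z.1 * √(z.1 * (p * (1 - p))) := by
    refine IsBigO.of_norm_eventuallyLE ?_
    filter_upwards [mem_inf_of_right (mem_principal_self window)] with z hz
    rw [Real.norm_eq_abs, abs_sub_comm, ← mul_assoc]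
    exact hz
  have hd : (fun z : ℕ × ℕ ↦ (z.2 : ℝ) - z.1 * p) =o[l] fun z ↦ (z.1 : ℝ) ^ (2 / 3 : ℝ) := by
    rw [show (2 / 3 : ℝ) = 1 / 6 + 1 / 2 by norm_num]
    exact hwindow.trans_isLittleO ((isLittleO_mul_sqrt_natCast_mul _ hA).comp_tendsto hfst)
  have hlim := Metric.tendsto_nhds.1 (tendsto_binomialGaussianRatio hp0 hp1 hfst hd) ε hε
  rw [eventually_inf_principal, eventually_comap] at hlim
  obtain ⟨N, hN⟩ := eventually_atTop.1 hlim
  exact ⟨N, fun n hn k hk ↦ (hN n hn (n, k) rfl hk).le⟩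

end LocalLimit

/-- **De Moivre–Laplace theorem, local form.**  Let `S_n` be binomial with
parameters `n` and `p` (so `ℙ[S_n = k] = C(n,k) p^k q^(n-k)` with `q = 1 - p`),
and let `(A_n)_{n≥1}` be a nondecreasing sequence with `A_1 ≥ 1` and
`A_n / n^(1/6) → 0`.  Then, uniformly over all integers `k` with
`|np - k| ≤ A_n √(npq)`,
`√(2π npq) · ℙ[S_n = k] · exp((np - k)²/(2npq)) → 1` as `n → ∞`. -/
theorem deMoivre_laplace_local (p : ℝ) (hp0 : 0 < p) (hp1 : p < 1)
    (A : ℕ → ℝ) (hA1 : 1 ≤ A 1)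
    (hAmono : ∀ m n : ℕ, 1 ≤ m → m ≤ n → A m ≤ A n)
    (hAsmall : Tendsto (fun n : ℕ => A n / (n : ℝ) ^ ((1 : ℝ) / 6)) atTop (nhds 0)) :
    ∀ ε : ℝ, 0 < ε → ∃ N₀ : ℕ, ∀ n : ℕ, N₀ ≤ n → ∀ k : ℕ,
      |(n : ℝ) * p - k| ≤ A n * Real.sqrt ((n : ℝ) * p * (1 - p)) →
      |Real.sqrt (2 * Real.pi * (n : ℝ) * p * (1 - p)) *
          ((n.choose k : ℝ) * p ^ k * (1 - p) ^ (n - k)) *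
          Real.exp (((n : ℝ) * p - k) ^ 2 / (2 * (n : ℝ) * p * (1 - p))) - 1| ≤ ε :=
  deMoivre_laplace_local_general p hp0 hp1 A hAsmall
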